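/- Let f_ε(q) = (1/2)·log(‖q‖² + ε) on ℝ⁴ⁿ ≅ ℂ²ⁿ, ε > 0. Then the coefficient density of (∂∂_J f_ε)ⁿ relative to Ω_n equals n!·(‖q‖² + 2ε) / (2·(‖q‖² + ε)^{n+1}). In particular, as ε → 0 this density converges pointwise (for q ≠ 0) and in L¹_loc to n!/(2‖q‖^{2n}). -/

import Mathlib

open Filter MeasureTheory

noncomputable section

/-- `ℝ^{4n} ≅ ℂ^{2n}` via `z_m = x_{2m} + (−1)^m x_{2m+1} i`. -/
abbrev En (n : ℕ) := EuclideanSpace ℝ (Fin (4 * n))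

/-- Partial derivative in the `m`-th coordinate direction (junk value `0` out of range). -/
def pD {n : ℕ} (m : ℕ) (f : En n → ℂ) (x : En n) : ℂ :=
  if h : m < 4 * n then fderiv ℝ f x (EuclideanSpace.single ⟨m, h⟩ 1) else 0

/-- Wirtinger derivative `∂_{z_m} = (∂_{x_{2m}} − (−1)^m i ∂_{x_{2m+1}})/2`. -/
def Wz {n : ℕ} (m : ℕ) (f : En n → ℂ) (x : En n) : ℂ :=
  (pD (2 * m) f x - (-1 : ℂ) ^ m * Complex.I * pD (2 * m + 1) f x) / 2

/-- Conjugate Wirtinger derivative `∂_{z̄_m} = (∂_{x_{2m}} + (−1)^m i ∂_{x_{2m+1}})/2`. -/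
def Wzb {n : ℕ} (m : ℕ) (f : En n → ℂ) (x : En n) : ℂ :=
  (pD (2 * m) f x + (-1 : ℂ) ^ m * Complex.I * pD (2 * m + 1) f x) / 2

/-- The index pairing `i ↦ i + (−1)^i`, i.e. `2j ↔ 2j+1`. -/
def pairIdx (i : ℕ) : ℕ := if Even i then i + 1 else i - 1

/-- The coefficient `c_{ij} = (−1)^{j+1} ∂_{z_i}∂_{z̄_{j+(−1)^j}} u` of `dz_i ∧ dz_j`
in `∂∂_J u = Σ_{i,j} c_{ij} dz_i ∧ dz_j`. -/
def cCoef {n : ℕ} (i j : ℕ) (u : En n → ℝ) (x : En n) : ℂ :=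
  (-1 : ℂ) ^ (j + 1) *
    Wz i (fun y => Wzb (pairIdx j) (fun w => (u w : ℂ)) y) x

/-- The density of `(∂∂_J u)ⁿ` relative to `Ω_n = dz_0 ∧ ... ∧ dz_{2n−1}`:
if `∂∂_J u = Σ_{i,j} c_{ij} dz_i∧dz_j`, then
`(∂∂_J u)ⁿ = (Σ_{σ ∈ S_{2n}} sgn σ ∏_{l<n} c_{σ(2l)σ(2l+1)}) · Ω_n`. -/
def density (n : ℕ) (u : En n → ℝ) (x : En n) : ℂ :=
  ∑ σ : Equiv.Perm (Fin (2 * n)),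
    ((Equiv.Perm.sign σ : ℤ) : ℂ) *
      ∏ l : Fin n,
        cCoef ((σ ⟨2 * l.val, by omega⟩).val) ((σ ⟨2 * l.val + 1, by omega⟩).val) u x

/-- The regularized fundamental solution `f_ε(q) = (1/2)·log(‖q‖² + ε)`. -/
def freg (n : ℕ) (ε : ℝ) (q : En n) : ℝ := (1 / 2) * Real.log (‖q‖ ^ 2 + ε)

section PairSum

variable {κ : Type*} [DecidableEq κ]

/-- The injection `κ → Option κ` missing exactly `o`. -/
def missing : Option κ → κ → Option κ
  | none, l => some l
  | some k, l => if l = k then none else some l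

theorem missing_injective (o : Option κ) : Function.Injective (missing o) := by
  intro l m h
  cases o with
  | none => simpa [missing] using h
  | some k => grind [missing]

theorem missing_ne (o : Option κ) (l : κ) : missing o l ≠ o := by
  cases o <;> grind [missing]

theorem exists_missing_eq {o p : Option κ} (h : p ≠ o) : ∃ l, missing o l = p := by
  cases o with
  | none => exact ⟨p.get (by cases p <;> simp_all), by simp [missing]⟩
  | some k =>
    cases p with
    | none => exact ⟨k, by simp [missing]⟩
    | some m => exact ⟨m, by simpa [missing] using h⟩

variable {R : Type*} [Fintype κ] [CommRing R]

/-- The alternating sum `Σ_σ sgn σ ∏_l c_l (σ (l, 0)) (σ (l, 1))`, i.e. the top-degree coefficient of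
the product of the two-forms `Σ_{i,j} c_l i j e_i ∧ e_j`. -/
def pairSum (c : κ → κ × Fin 2 → κ × Fin 2 → R) : R :=
  ∑ σ : Equiv.Perm (κ × Fin 2), ((Equiv.Perm.sign σ : ℤ) : R) * ∏ l, c l (σ (l, 0)) (σ (l, 1))

theorem pairSum_eq_zero_of_symm [IsDomain R] [CharZero R]
    (c : κ → κ × Fin 2 → κ × Fin 2 → R) (k : κ)
    (hk : ∀ i j, c k i j = c k j i) : pairSum c = 0 := by
  have hswap : ((k, 0) : κ × Fin 2) ≠ (k, 1) := by simp
  have h : pairSum c = -pairSum c := by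
    conv_lhs => rw [pairSum, ← Equiv.sum_comp (Equiv.mulRight (Equiv.swap (k, 0) (k, 1)))]
    rw [pairSum, ← Finset.sum_neg_distrib]
    refine Finset.sum_congr rfl fun σ _ => ?_
    have hp : ∏ l, c l ((σ * Equiv.swap (k, 0) (k, 1) : Equiv.Perm _) (l, 0))
        ((σ * Equiv.swap (k, 0) (k, 1) : Equiv.Perm _) (l, 1)) = ∏ l, c l (σ (l, 0)) (σ (l, 1)) := by
      refine Finset.prod_congr rfl fun l _ => ?_
      by_cases hl : l = k
      · subst hl
        simp [Equiv.Perm.mul_apply, hk (σ (l, 1))]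
      · rw [Equiv.Perm.mul_apply, Equiv.Perm.mul_apply, Equiv.swap_apply_of_ne_of_ne,
          Equiv.swap_apply_of_ne_of_ne] <;> simp [hl]
    rw [Equiv.coe_mulRight, hp, Equiv.Perm.sign_mul, Equiv.Perm.sign_swap hswap]
    simp
  exact self_eq_neg.mp h

theorem pairSum_congr_of_sub_symm [IsDomain R] [CharZero R] (c d : κ × Fin 2 → κ × Fin 2 → R)
    (h : ∀ i j, c i j - d i j = c j i - d j i) :
    pairSum (fun _ : κ => c) = pairSum (fun _ : κ => d) := by
  suffices H : ∀ S : Finset κ, pairSum (fun l => if l ∈ S then d else c) =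
      pairSum (fun _ : κ => c) by simpa using (H Finset.univ).symm
  intro S
  induction S using Finset.induction_on with
  | empty => simp
  | insert k S hk ih =>
    rw [← ih, ← sub_eq_zero, ← neg_eq_zero, neg_sub,
      ← pairSum_eq_zero_of_symm (fun l => if l = k then c - d else if l ∈ S then d else c) k
        (by simpa using h)]
    simp only [pairSum, ← Finset.sum_sub_distrib, ← mul_sub]
    refine Finset.sum_congr rfl fun σ _ => ?_
    congr 1
    simp only [← Finset.mul_prod_erase Finset.univ _ (Finset.mem_univ k)]
    have hd : ∏ l ∈ Finset.univ.erase k, (if l ∈ insert k S then d else c) (σ (l, 0)) (σ (l, 1)) =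
        ∏ l ∈ Finset.univ.erase k, (if l ∈ S then d else c) (σ (l, 0)) (σ (l, 1)) :=
      Finset.prod_congr rfl fun l hl => by simp [Finset.ne_of_mem_erase hl]
    have hcd : ∏ l ∈ Finset.univ.erase k,
        (if l = k then c - d else if l ∈ S then d else c) (σ (l, 0)) (σ (l, 1)) =
        ∏ l ∈ Finset.univ.erase k, (if l ∈ S then d else c) (σ (l, 0)) (σ (l, 1)) :=
      Finset.prod_congr rfl fun l hl => by simp [Finset.ne_of_mem_erase hl]
    rw [hd, hcd]
    simp [hk, sub_mul]

theorem pairSum_sum {M : Type*} [Fintype M] (w : M → κ × Fin 2 → κ × Fin 2 → R) :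
    pairSum (fun _ : κ => fun i j => ∑ m, w m i j) =
      ∑ μ : κ → M, pairSum (fun l => w (μ l)) := by
  classical
  simp only [pairSum, Finset.prod_univ_sum, Finset.mul_sum, Fintype.piFinset_univ]
  exact Finset.sum_comm

theorem pairSum_comp_perm (c : κ → κ × Fin 2 → κ × Fin 2 → R) (π : Equiv.Perm κ) :
    pairSum (fun l => c (π l)) = pairSum c := by
  have hs : Equiv.Perm.sign (Equiv.prodCongrLeft fun _ : Fin 2 => π) = 1 := by
    rw [Equiv.Perm.sign_prodCongrLeft]
    simp
  conv_lhs =>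
    rw [pairSum, ← Equiv.sum_comp (Equiv.mulRight (Equiv.prodCongrLeft fun _ : Fin 2 => π))]
  refine Finset.sum_congr rfl fun σ _ => ?_
  rw [Equiv.coe_mulRight, Equiv.Perm.sign_mul, hs, mul_one,
    ← Equiv.prod_comp π fun l => c l (σ (l, 0)) (σ (l, 1))]
  simp [Equiv.Perm.mul_apply]

theorem pairSum_rankOne (u : κ → Fin 2 → κ × Fin 2 → R) :
    pairSum (fun l i j => u l 0 i * u l 1 j) =
      (Matrix.of fun i : κ × Fin 2 => u i.1 i.2).det := by
  rw [← Matrix.det_transpose, Matrix.det_apply', pairSum]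
  refine Finset.sum_congr rfl fun σ _ => ?_
  rw [Fintype.prod_prod_type]
  simp [Fin.prod_univ_two]

theorem sum_injective_eq_sum_missing (F : (κ → Option κ) → R)
    (hF : ∀ μ, ¬ Function.Injective μ → F μ = 0) :
    ∑ μ, F μ = ∑ o, ∑ π : Equiv.Perm κ, F (missing o ∘ π) := by
  rw [← Fintype.sum_prod_type' (f := fun o (π : Equiv.Perm κ) => F (missing o ∘ π))]
  symm
  refine Finset.sum_of_injOn (fun x : Option κ × Equiv.Perm κ => missing x.1 ∘ x.2) ?_
    (by simp) ?_ (by simp)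
  · rintro ⟨o, π⟩ - ⟨p, ρ⟩ - h
    have hop : o = p := by
      by_contra hne
      obtain ⟨l, hl⟩ := exists_missing_eq hne
      have := congrFun h (ρ.symm l)
      simp [hl, missing_ne] at this
    subst hop
    simp only [Prod.mk.injEq, true_and]
    ext l
    exact missing_injective o (congrFun h l)
  · intro μ _ hμ
    apply hF
    intro hinj
    apply hμ
    obtain ⟨o, ho⟩ : ∃ o, ∀ l, μ l ≠ o := by
      by_contra! hsurj
      have := Fintype.card_le_of_surjective μ hsurj
      simp at this
    choose p hp using fun l => exists_missing_eq (ho l)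
    have hpinj : Function.Injective p := fun l m h => hinj (by rw [← hp, ← hp, h])
    refine ⟨(o, Equiv.ofBijective p (Finite.injective_iff_bijective.mp hpinj)), by simp, ?_⟩
    ext1 l
    simp [hp]

theorem det_replace_block (t : R) (k : κ) (u : Fin 2 → κ × Fin 2 → R) :
    (Matrix.of fun i : κ × Fin 2 => if i.1 = k then u i.2 else
      Pi.single i (if i.2 = 0 then t else 1)).det =
    t ^ (Fintype.card κ - 1) * (u 0 (k, 0) * u 1 (k, 1) - u 0 (k, 1) * u 1 (k, 0)) := by
  set N : Matrix (κ × Fin 2) (κ × Fin 2) R := Matrix.of fun i : κ × Fin 2 =>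
    if i.1 = k then u i.2 else Pi.single i (if i.2 = 0 then t else 1) with hN
  rw [Matrix.twoBlockTriangular_det N (fun i => i.1 = k), mul_comm]
  · congr 1
    · have : N.toSquareBlockProp (fun i => ¬ i.1 = k) =
          Matrix.diagonal fun i => if i.1.2 = 0 then t else 1 := by
        ext ⟨i, hi⟩ ⟨j, hj⟩
        simp [hN, Matrix.toSquareBlockProp, hi, Matrix.diagonal_apply, Pi.single_apply,
          eq_comm (a := j)]
      rw [this, Matrix.det_diagonal,
        ← Finset.prod_subtype (Finset.univ.filter fun i : κ × Fin 2 => ¬ i.1 = k) (by simp)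
          (fun i : κ × Fin 2 => if i.2 = 0 then t else 1),
        Finset.prod_filter, Fintype.prod_prod_type]
      simp [Finset.prod_ite, Finset.filter_ne', Finset.card_erase_of_mem]
    · let e : Fin 2 ≃ {i : κ × Fin 2 // i.1 = k} :=
        { toFun := fun b => ⟨(k, b), rfl⟩
          invFun := fun i => i.1.2
          left_inv := fun _ => rfl
          right_inv := by rintro ⟨⟨l, b⟩, rfl⟩; rfl }
      rw [← Matrix.det_submatrix_equiv_self e, Matrix.det_fin_two]
      simp [hN, e, Matrix.toSquareBlockProp]
  · rintro ⟨i, b⟩ hi ⟨j, d⟩ hj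
    simp only at hi hj
    subst hj
    simp [hN, hi, Ne.symm hi]

theorem det_standard (t : R) :
    (Matrix.of fun i : κ × Fin 2 =>
      (Pi.single i (if i.2 = 0 then t else 1) : κ × Fin 2 → R)).det = t ^ Fintype.card κ := by
  have : (Matrix.of fun i : κ × Fin 2 =>
      (Pi.single i (if i.2 = 0 then t else 1) : κ × Fin 2 → R)) =
      Matrix.diagonal fun i => if i.2 = 0 then t else 1 := by
    ext i j
    simp [Matrix.diagonal_apply, Pi.single_apply, eq_comm]
  rw [this, Matrix.det_diagonal, Fintype.prod_prod_type]
  simp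

/-- The top power of the two-form `t Σ_k e_{k0} ∧ e_{k1} + a ∧ b`. -/
theorem pairSum_standard_add_rankOne (t : R) (a b : κ × Fin 2 → R) :
    pairSum (fun _ : κ => fun i j =>
      (∑ k, (Pi.single (k, 0) t : κ × Fin 2 → R) i * (Pi.single (k, 1) 1 : κ × Fin 2 → R) j)
        + a i * b j) =
    (Fintype.card κ).factorial * (t ^ Fintype.card κ + t ^ (Fintype.card κ - 1) *
      ∑ k, (a (k, 0) * b (k, 1) - a (k, 1) * b (k, 0))) := by
  let u : Option κ → Fin 2 → κ × Fin 2 → R := fun o β =>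
    o.elim (if β = 0 then a else b) fun k => Pi.single (k, β) (if β = 0 then t else 1)
  have hsum : pairSum (fun _ : κ => fun i j =>
      (∑ k, (Pi.single (k, 0) t : κ × Fin 2 → R) i * (Pi.single (k, 1) 1 : κ × Fin 2 → R) j)
        + a i * b j) = pairSum (fun _ : κ => fun i j => ∑ o, u o 0 i * u o 1 j) := by
    simp [Fintype.sum_option, u, add_comm]
  rw [hsum, pairSum_sum (fun o i j => u o 0 i * u o 1 j), sum_injective_eq_sum_missing]
  · have hperm : ∀ o : Option κ, ∀ π : Equiv.Perm κ,
        pairSum (fun l i j => u ((missing o ∘ π) l) 0 i * u ((missing o ∘ π) l) 1 j) =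
          (Matrix.of fun i : κ × Fin 2 => u (missing o i.1) i.2).det := by
      intro o π
      rw [← pairSum_rankOne (fun l => u (missing o l)),
        ← pairSum_comp_perm (fun l i j => u (missing o l) 0 i * u (missing o l) 1 j) π]
      rfl
    have hsome : ∀ k : κ, (Matrix.of fun i : κ × Fin 2 => u (missing (some k) i.1) i.2).det =
        t ^ (Fintype.card κ - 1) * (a (k, 0) * b (k, 1) - a (k, 1) * b (k, 0)) := by
      intro k
      have := det_replace_block t k (fun β : Fin 2 => if β = 0 then a else b)
      simp only [if_true, one_ne_zero, if_false] at this
      rw [← this]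
      congr 2
      ext1 i
      by_cases hi : i.1 = k <;> simp [missing, u, hi]
    simp only [hperm, Finset.sum_const, Finset.card_univ, Fintype.card_perm, nsmul_eq_mul]
    rw [← Finset.mul_sum, Fintype.sum_option, Finset.mul_sum]
    simp only [hsome]
    congr 2
    exact det_standard t
  · intro μ hμ
    obtain ⟨l, m, hlm, hne⟩ : ∃ l m, μ l = μ m ∧ l ≠ m := by
      simpa [Function.Injective] using hμ
    rw [pairSum_rankOne (fun l => u (μ l))]
    refine Matrix.det_zero_of_row_eq (i := (l, 0)) (j := (m, 0)) (by simp [hne]) ?_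
    ext j
    simp [hlm]

end PairSum

/-- The `m`-th real coordinate, extended by zero out of range. -/
def xCoord {n : ℕ} (m : ℕ) (q : En n) : ℝ := if h : m < 4 * n then q ⟨m, h⟩ else 0

/-- The complex coordinate `z_m = x_{2m} + (−1)^m x_{2m+1} i`. -/
def zCoord {n : ℕ} (m : ℕ) (q : En n) : ℂ :=
  xCoord (2 * m) q + (-1 : ℂ) ^ m * Complex.I * xCoord (2 * m + 1) q

theorem HasFDerivAt.pD_ofReal {n : ℕ} {u : En n → ℝ} {u' : En n →L[ℝ] ℝ} {x : En n}
    (hu : HasFDerivAt u u' x) {m : ℕ} (hm : m < 4 * n) :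
    pD m (fun w => (u w : ℂ)) x = (u' (EuclideanSpace.single ⟨m, hm⟩ 1) : ℂ) := by
  have h : HasFDerivAt (fun w => (u w : ℂ)) (Complex.ofRealCLM.comp u') x :=
    Complex.ofRealCLM.hasFDerivAt.comp x hu
  simp [pD, hm, h.fderiv]

theorem hasFDerivAt_normSq_add {n : ℕ} (ε : ℝ) (x : En n) :
    HasFDerivAt (fun w : En n => ‖w‖ ^ 2 + ε) (2 • innerSL ℝ x) x :=
  (hasStrictFDerivAt_norm_sq x).hasFDerivAt.add_const ε

theorem pD_freg {n : ℕ} {ε : ℝ} (hε : 0 < ε) {m : ℕ} (hm : m < 4 * n) (x : En n) :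
    pD m (fun w => (freg n ε w : ℂ)) x = ((xCoord m x / (‖x‖ ^ 2 + ε) : ℝ) : ℂ) := by
  have hpos : ‖x‖ ^ 2 + ε ≠ 0 := by positivity
  have h : HasFDerivAt (freg n ε) _ x :=
    ((hasFDerivAt_normSq_add ε x).log hpos).const_mul (1 / 2)
  rw [h.pD_ofReal hm]
  simp [xCoord, hm, EuclideanSpace.inner_single_right]
  field_simp

theorem hasFDerivAt_xCoord {n : ℕ} {m : ℕ} (hm : m < 4 * n) (x : En n) :
    HasFDerivAt (xCoord m) (EuclideanSpace.proj ⟨m, hm⟩ : En n →L[ℝ] ℝ) x := by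
  have : (xCoord m : En n → ℝ) = (EuclideanSpace.proj ⟨m, hm⟩ : En n →L[ℝ] ℝ) := by
    ext w
    simp [xCoord, hm]
  rw [this]
  exact ContinuousLinearMap.hasFDerivAt _

theorem hasFDerivAt_xCoord_div {n : ℕ} {ε : ℝ} (hε : 0 < ε) {m : ℕ} (hm : m < 4 * n) (x : En n) :
    HasFDerivAt (fun w : En n => xCoord m w / (‖w‖ ^ 2 + ε))
      ((‖x‖ ^ 2 + ε)⁻¹ • (EuclideanSpace.proj ⟨m, hm⟩ : En n →L[ℝ] ℝ) -
        (2 * xCoord m x / (‖x‖ ^ 2 + ε) ^ 2) • innerSL ℝ x) x := by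
  have hpos : ‖x‖ ^ 2 + ε ≠ 0 := by positivity
  have hinv := (hasDerivAt_inv hpos).comp_hasFDerivAt x (hasFDerivAt_normSq_add ε x)
  have h := (hasFDerivAt_xCoord hm x).fun_mul hinv
  simp only [Function.comp_def, ← div_eq_mul_inv] at h
  refine h.congr_fderiv ?_
  ext v
  simp
  ring

theorem pD_xCoord_div {n : ℕ} {ε : ℝ} (hε : 0 < ε) {k m : ℕ} (hk : k < 4 * n) (hm : m < 4 * n)
    (x : En n) :
    pD k (fun w : En n => ((xCoord m w / (‖w‖ ^ 2 + ε) : ℝ) : ℂ)) x =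
      (if m = k then 1 else 0) * ((‖x‖ : ℂ) ^ 2 + ε)⁻¹ -
        2 * xCoord m x * xCoord k x * ((‖x‖ : ℂ) ^ 2 + ε)⁻¹ ^ 2 := by
  rw [(hasFDerivAt_xCoord_div hε hm x).pD_ofReal hk]
  simp [xCoord, hk, EuclideanSpace.inner_single_right]
  split_ifs <;> simp <;> ring

theorem pD_combination {n : ℕ} {u v : En n → ℝ} {x : En n} (hu : DifferentiableAt ℝ u x)
    (hv : DifferentiableAt ℝ v x) (c : ℂ) (k : ℕ) :
    pD k (fun w => ((u w : ℂ) + c * (v w : ℂ)) / 2) x =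
      (pD k (fun w => (u w : ℂ)) x + c * pD k (fun w => (v w : ℂ)) x) / 2 := by
  by_cases hk : k < 4 * n
  · have hu' : HasFDerivAt (fun w => (u w : ℂ)) (Complex.ofRealCLM.comp (fderiv ℝ u x)) x :=
      Complex.ofRealCLM.hasFDerivAt.comp x hu.hasFDerivAt
    have hv' : HasFDerivAt (fun w => (v w : ℂ)) (Complex.ofRealCLM.comp (fderiv ℝ v x)) x :=
      Complex.ofRealCLM.hasFDerivAt.comp x hv.hasFDerivAt
    have h := (hu'.fun_add (hv'.const_mul c)).mul_const (2⁻¹ : ℂ)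
    simp only [← div_eq_mul_inv] at h
    simp [pD, hk, hu'.fderiv, hv'.fderiv, h.fderiv]
    ring
  · simp [pD, hk]

theorem Wzb_freg {n : ℕ} {ε : ℝ} (hε : 0 < ε) {m : ℕ} (hm : m < 2 * n) (x : En n) :
    Wzb m (fun w => (freg n ε w : ℂ)) x =
      (((xCoord (2 * m) x / (‖x‖ ^ 2 + ε) : ℝ) : ℂ) + (-1 : ℂ) ^ m * Complex.I *
        ((xCoord (2 * m + 1) x / (‖x‖ ^ 2 + ε) : ℝ) : ℂ)) / 2 := by
  rw [Wzb, pD_freg hε (by omega), pD_freg hε (by omega)]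

theorem Wz_Wzb_freg {n : ℕ} {ε : ℝ} (hε : 0 < ε) {i m : ℕ} (hi : i < 2 * n) (hm : m < 2 * n)
    (x : En n) :
    Wz i (fun y => Wzb m (fun w => (freg n ε w : ℂ)) y) x =
      (if m = i then 1 else 0) * ((‖x‖ : ℂ) ^ 2 + ε)⁻¹ / 2 -
        (starRingEnd ℂ) (zCoord i x) * zCoord m x * ((‖x‖ : ℂ) ^ 2 + ε)⁻¹ ^ 2 / 2 := by
  have hd : ∀ k < 4 * n, DifferentiableAt ℝ (fun w : En n => xCoord k w / (‖w‖ ^ 2 + ε)) x :=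
    fun k hk => (hasFDerivAt_xCoord_div hε hk x).differentiableAt
  simp only [Wzb_freg hε hm]
  rw [Wz]
  simp only [pD_combination (hd (2 * m) (by omega)) (hd (2 * m + 1) (by omega))]
  have h1 : (-1 : ℂ) ^ m * (-1 : ℂ) ^ m = 1 := by rw [← mul_pow]; simp
  have ne1 : 2 * m + 1 ≠ 2 * i := by omega
  have ne2 : 2 * m ≠ 2 * i + 1 := by omega
  rw [pD_xCoord_div hε (by omega) (by omega), pD_xCoord_div hε (by omega) (by omega),
    pD_xCoord_div hε (by omega) (by omega), pD_xCoord_div hε (by omega) (by omega)]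
  simp only [zCoord, map_add, map_mul, map_pow, map_neg, map_one, Complex.conj_I,
    Complex.conj_ofReal, if_neg ne1, if_neg ne2, add_left_inj, mul_eq_mul_left_iff,
    OfNat.ofNat_ne_zero, or_false]
  generalize ((‖x‖ : ℂ) ^ 2 + ε)⁻¹ = t
  by_cases hmi : m = i
  · subst hmi
    simp only [if_true]
    linear_combination (-(Complex.I * Complex.I) * t / 4) * h1
      - (t / 4) * Complex.I_mul_I
  · simp only [if_neg hmi]
    ring

theorem cCoef_freg {n : ℕ} {ε : ℝ} (hε : 0 < ε) {i j : ℕ} (hi : i < 2 * n) (hj : j < 2 * n)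
    (x : En n) :
    cCoef i j (freg n ε) x = (-1 : ℂ) ^ (j + 1) *
      ((if pairIdx j = i then 1 else 0) * ((‖x‖ : ℂ) ^ 2 + ε)⁻¹ / 2 -
        (starRingEnd ℂ) (zCoord i x) * zCoord (pairIdx j) x *
          ((‖x‖ : ℂ) ^ 2 + ε)⁻¹ ^ 2 / 2) := by
  have hj' : pairIdx j < 2 * n := by
    unfold pairIdx
    split_ifs with h
    · obtain ⟨r, rfl⟩ := h
      omega
    · omega
  rw [cCoef, Wz_Wzb_freg hε hi hj']

/-- The splitting of `Fin (2n)` into the pairs `{2l, 2l+1}`. -/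
def pairEquiv (n : ℕ) : Fin n × Fin 2 ≃ Fin (2 * n) :=
  finProdFinEquiv.trans (finCongr (mul_comm n 2))

theorem pairEquiv_val {n : ℕ} (i : Fin n × Fin 2) :
    (pairEquiv n i : ℕ) = 2 * i.1 + i.2 := by
  simp [pairEquiv, add_comm]

theorem density_eq_pairSum {n : ℕ} (u : En n → ℝ) (x : En n) :
    density n u x = pairSum fun _ : Fin n => fun i j =>
      cCoef (pairEquiv n i : ℕ) (pairEquiv n j : ℕ) u x := by
  rw [density, pairSum, ← Equiv.sum_comp (pairEquiv n).permCongr]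
  refine Finset.sum_congr rfl fun σ _ => ?_
  rw [Equiv.Perm.sign_permCongr]
  congr 1
  refine Finset.prod_congr rfl fun l _ => ?_
  have h0 : (⟨2 * l.val, by omega⟩ : Fin (2 * n)) = pairEquiv n (l, 0) := by
    ext
    simp [pairEquiv_val]
  have h1 : (⟨2 * l.val + 1, by omega⟩ : Fin (2 * n)) = pairEquiv n (l, 1) := by
    ext
    simp [pairEquiv_val]
  rw [h0, h1]
  simp [Equiv.permCongr_apply]

theorem zCoord_conj_mul_self {n : ℕ} (m : ℕ) (x : En n) :
    (starRingEnd ℂ) (zCoord m x) * zCoord m x =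
      (xCoord (2 * m) x : ℂ) ^ 2 + (xCoord (2 * m + 1) x : ℂ) ^ 2 := by
  have h1 : (-1 : ℂ) ^ m * (-1 : ℂ) ^ m = 1 := by rw [← mul_pow]; simp
  simp only [zCoord, map_add, map_mul, map_pow, map_neg, map_one, Complex.conj_I,
    Complex.conj_ofReal]
  linear_combination (-(Complex.I * Complex.I) * (xCoord (2 * m + 1) x : ℂ) ^ 2) * h1
      - (xCoord (2 * m + 1) x : ℂ) ^ 2 * Complex.I_mul_I

theorem sum_zCoord_conj_mul_self {n : ℕ} (x : En n) :
    ∑ k : Fin n, ((starRingEnd ℂ) (zCoord (2 * k) x) * zCoord (2 * k) x +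
      (starRingEnd ℂ) (zCoord (2 * k + 1) x) * zCoord (2 * k + 1) x) = (‖x‖ : ℂ) ^ 2 := by
  have h : ‖x‖ ^ 2 = ∑ k : Fin n, (xCoord (2 * (2 * k)) x ^ 2 + xCoord (2 * (2 * k) + 1) x ^ 2 +
      (xCoord (2 * (2 * k + 1)) x ^ 2 + xCoord (2 * (2 * k + 1) + 1) x ^ 2)) := by
    rw [EuclideanSpace.real_norm_sq_eq,
      ← Equiv.sum_comp (finProdFinEquiv.trans (finCongr (mul_comm n 4))), Fintype.sum_prod_type]
    refine Finset.sum_congr rfl fun k _ => ?_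
    have hx : ∀ b : Fin 4, x ((finProdFinEquiv.trans (finCongr (mul_comm n 4))) (k, b)) =
        xCoord (4 * k + b) x := by
      intro b
      rw [xCoord, dif_pos (by omega)]
      exact congrArg x (Fin.ext (by simp [add_comm]))
    simp only [hx, Fin.sum_univ_four]
    have e0 : 2 * (2 * (k : ℕ)) = 4 * k := by ring
    have e1 : 2 * (2 * (k : ℕ) + 1) = 4 * k + 2 := by ring
    rw [e0, e1]
    simp [add_assoc]
  rw [← Complex.ofReal_pow, h]
  simp only [zCoord_conj_mul_self]
  push_cast
  rfl

theorem density_freg {n : ℕ} (hn : 1 ≤ n) {ε : ℝ} (hε : 0 < ε) (q : En n) :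
    density n (freg n ε) q =
      (((n.factorial : ℝ) * (‖q‖ ^ 2 + 2 * ε) / (2 * (‖q‖ ^ 2 + ε) ^ (n + 1)) : ℝ) : ℂ) := by
  have hpos : ‖q‖ ^ 2 + ε ≠ 0 := by positivity
  have hposC : (‖q‖ : ℂ) ^ 2 + ε ≠ 0 := by exact_mod_cast hpos
  set t : ℂ := ((‖q‖ : ℂ) ^ 2 + ε)⁻¹ with ht
  let a : Fin n × Fin 2 → ℂ := fun i => (starRingEnd ℂ) (zCoord (2 * i.1 + i.2) q)
  let b : Fin n × Fin 2 → ℂ := fun j =>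
    if j.2 = 0 then t ^ 2 / 2 * zCoord (2 * j.1 + 1) q else -(t ^ 2 / 2 * zCoord (2 * j.1) q)
  have hpair0 : ∀ l : ℕ, pairIdx (2 * l) = 2 * l + 1 := by simp [pairIdx]
  have hpair1 : ∀ l : ℕ, pairIdx (2 * l + 1) = 2 * l := by simp [pairIdx]
  have hstd : ∀ i j : Fin n × Fin 2, ∑ k, (Pi.single (k, 0) t : Fin n × Fin 2 → ℂ) i *
      (Pi.single (k, 1) 1 : Fin n × Fin 2 → ℂ) j =
        if i.2 = 0 ∧ j.2 = 1 ∧ i.1 = j.1 then t else 0 := by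
    rintro ⟨i, β⟩ ⟨j, γ⟩
    by_cases h : β = 0 ∧ γ = 1 ∧ i = j
    · obtain ⟨rfl, rfl, rfl⟩ := h
      simp [Pi.single_apply]
    · rw [if_neg h]
      refine Finset.sum_eq_zero fun k _ => ?_
      simp only [Pi.single_apply, Prod.mk.injEq]
      split_ifs <;> simp_all
  have hC : ∀ i j : Fin n × Fin 2, cCoef (pairEquiv n i : ℕ) (pairEquiv n j : ℕ) (freg n ε) q =
      (if i.1 = j.1 ∧ i.2 ≠ j.2 then (if i.2 = 0 then t / 2 else -(t / 2)) else 0)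
        + a i * b j := by
    rintro ⟨i, β⟩ ⟨j, γ⟩
    rw [cCoef_freg hε (Fin.is_lt _) (Fin.is_lt _), pairEquiv_val, pairEquiv_val]
    rw [← ht]
    fin_cases β <;> fin_cases γ <;>
      simp only [Fin.zero_eta, Fin.mk_one, Fin.val_zero, Fin.val_one, add_zero, hpair0, hpair1, a, b]
    · have : 2 * (j : ℕ) + 1 ≠ 2 * i := by omega
      simp [pow_add, pow_mul, this]
      ring
    · have : 2 * (j : ℕ) = 2 * i ↔ i = j := by omega
      simp only [this]
      split_ifs <;> simp_all [pow_add, pow_mul] <;> ring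
    · have : 2 * (j : ℕ) + 1 = 2 * i + 1 ↔ i = j := by omega
      simp only [this]
      split_ifs <;> simp_all [pow_add, pow_mul] <;> ring
    · have : 2 * (j : ℕ) ≠ 2 * i + 1 := by omega
      simp [pow_add, pow_mul, this]
      ring
  have hsum : ∑ k, (a (k, 0) * b (k, 1) - a (k, 1) * b (k, 0)) =
      -(t ^ 2 / 2) * (‖q‖ : ℂ) ^ 2 := by
    rw [← sum_zCoord_conj_mul_self, Finset.mul_sum]
    refine Finset.sum_congr rfl fun k _ => ?_
    simp [a, b]
    ring
  rw [density_eq_pairSum, pairSum_congr_of_sub_symm _ (fun i j =>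
    (∑ k, (Pi.single (k, 0) t : Fin n × Fin 2 → ℂ) i * (Pi.single (k, 1) 1 : Fin n × Fin 2 → ℂ) j)
      + a i * b j), pairSum_standard_add_rankOne, hsum, Fintype.card_fin]
  · obtain ⟨m, rfl⟩ := Nat.exists_eq_add_of_le' hn
    have hq : (‖q‖ : ℂ) ^ 2 + 2 * ε = 2 * t⁻¹ - (‖q‖ : ℂ) ^ 2 := by rw [ht, inv_inv]; ring
    have ht0 : t ≠ 0 := inv_ne_zero hposC
    have hqi : (‖q‖ : ℂ) ^ 2 + ε = t⁻¹ := by rw [ht, inv_inv]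
    push_cast
    rw [hq, hqi]
    clear_value t
    simp only [inv_pow]
    field_simp
    ring
  · rintro ⟨i, β⟩ ⟨j, γ⟩
    simp only [hC, hstd, add_sub_add_right_eq_sub]
    fin_cases β <;> fin_cases γ <;> by_cases h : i = j <;>
      simp [h, eq_comm (a := j)] <;> ring

theorem tendsto_density_freg {n : ℕ} (hn : 1 ≤ n) {q : En n} (hq : q ≠ 0) :
    Tendsto (fun ε : ℝ => density n (freg n ε) q) (nhdsWithin 0 (Set.Ioi 0))
      (nhds (((n.factorial : ℝ) / (2 * ‖q‖ ^ (2 * n)) : ℝ) : ℂ)) := by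
  have hpos : ‖q‖ ≠ 0 := norm_ne_zero_iff.mpr hq
  have hcont : ContinuousAt (fun ε : ℝ =>
      (n.factorial : ℝ) * (‖q‖ ^ 2 + 2 * ε) / (2 * (‖q‖ ^ 2 + ε) ^ (n + 1))) 0 := by
    refine ContinuousAt.div (by fun_prop) (by fun_prop) ?_
    simp [hpos]
  have hval : (n.factorial : ℝ) * (‖q‖ ^ 2 + 2 * 0) / (2 * (‖q‖ ^ 2 + 0) ^ (n + 1)) =
      (n.factorial : ℝ) / (2 * ‖q‖ ^ (2 * n)) := by
    rw [pow_mul]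
    field_simp
    ring
  have hreal := hcont.tendsto.mono_left (nhdsWithin_le_nhds (s := Set.Ioi 0))
  rw [hval] at hreal
  refine ((Complex.continuous_ofReal.tendsto _).comp hreal).congr' ?_
  filter_upwards [self_mem_nhdsWithin] with ε hε
  exact (density_freg hn hε q).symm

theorem norm_density_freg_sub_le {n : ℕ} (hn : 1 ≤ n) {ε : ℝ} (hε : 0 < ε) {q : En n}
    (hq : q ≠ 0) :
    ‖density n (freg n ε) q - (((n.factorial : ℝ) / (2 * ‖q‖ ^ (2 * n)) : ℝ) : ℂ)‖ ≤
      (n.factorial : ℝ) / (2 * ‖q‖ ^ (2 * n)) := by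
  have hs : 0 < ‖q‖ ^ 2 := by positivity
  rw [density_freg hn hε, ← Complex.ofReal_sub, Complex.norm_real, Real.norm_eq_abs, pow_mul]
  have hle : (n.factorial : ℝ) * (‖q‖ ^ 2 + 2 * ε) / (2 * (‖q‖ ^ 2 + ε) ^ (n + 1)) ≤
      2 * ((n.factorial : ℝ) / (2 * (‖q‖ ^ 2) ^ n)) := by
    calc (n.factorial : ℝ) * (‖q‖ ^ 2 + 2 * ε) / (2 * (‖q‖ ^ 2 + ε) ^ (n + 1))
        ≤ (n.factorial : ℝ) * (2 * (‖q‖ ^ 2 + ε)) / (2 * (‖q‖ ^ 2 + ε) ^ (n + 1)) := by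
          gcongr
          linarith
      _ = (n.factorial : ℝ) / (‖q‖ ^ 2 + ε) ^ n := by
          field_simp
          ring
      _ ≤ (n.factorial : ℝ) / (‖q‖ ^ 2) ^ n := by
          gcongr
          linarith
      _ = 2 * ((n.factorial : ℝ) / (2 * (‖q‖ ^ 2) ^ n)) := by
          field_simp
  have hnonneg : 0 ≤ (n.factorial : ℝ) * (‖q‖ ^ 2 + 2 * ε) / (2 * (‖q‖ ^ 2 + ε) ^ (n + 1)) := by
    positivity
  rw [abs_le]
  constructor <;> linarith

theorem integrableOn_const_div_norm_pow {n : ℕ} (hn : 1 ≤ n) (c : ℝ) {K : Set (En n)}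
    (hK : IsCompact K) : IntegrableOn (fun q : En n => c / (2 * ‖q‖ ^ (2 * n))) K := by
  have : Nonempty (Fin (4 * n)) := ⟨⟨0, by omega⟩⟩
  obtain ⟨r, hr⟩ := hK.isBounded.subset_ball 0
  refine IntegrableOn.mono_set ?_ hr
  rw [integrableOn_fun_norm_addHaar volume (f := fun y : ℝ => c / (2 * y ^ (2 * n)))]
  have hcont : IntegrableOn (fun y : ℝ => y ^ (2 * n - 1) * (c / 2)) (Set.Ioo 0 r) :=
    ((by fun_prop : Continuous fun y : ℝ => y ^ (2 * n - 1) * (c / 2)).integrableOn_Icc).mono_set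
      Set.Ioo_subset_Icc_self
  refine hcont.congr_fun (fun y hy => ?_) measurableSet_Ioo
  have hy0 : y ≠ 0 := hy.1.ne'
  have hexp : 4 * n - 1 = (2 * n - 1) + 2 * n := by omega
  simp only [finrank_euclideanSpace, Fintype.card_fin, smul_eq_mul, hexp, pow_add]
  field_simp

theorem stmt_16 (n : ℕ) (hn : 1 ≤ n) :
    (∀ ε : ℝ, 0 < ε → ∀ q : En n,
      density n (freg n ε) q =
        (((n.factorial : ℝ) * (‖q‖ ^ 2 + 2 * ε) / (2 * (‖q‖ ^ 2 + ε) ^ (n + 1)) : ℝ) : ℂ)) ∧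
    (∀ q : En n, q ≠ 0 →
      Tendsto (fun ε : ℝ => density n (freg n ε) q) (nhdsWithin 0 (Set.Ioi 0))
        (nhds (((n.factorial : ℝ) / (2 * ‖q‖ ^ (2 * n)) : ℝ) : ℂ))) ∧
    (∀ K : Set (En n), IsCompact K →
      Tendsto
        (fun ε : ℝ =>
          ∫ q in K, ‖density n (freg n ε) q -
            (((n.factorial : ℝ) / (2 * ‖q‖ ^ (2 * n)) : ℝ) : ℂ)‖)
        (nhdsWithin 0 (Set.Ioi 0)) (nhds 0)) := by
  refine ⟨fun ε hε q => density_freg hn hε q, fun q hq => tendsto_density_freg hn hq,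
    fun K hK => ?_⟩
  have : Nonempty (Fin (4 * n)) := ⟨⟨0, by omega⟩⟩
  have hae : ∀ᵐ q : En n ∂volume.restrict K, q ≠ 0 :=
    ae_restrict_of_ae (Measure.ae_ne volume 0)
  have hzero : (0 : ℝ) = ∫ _ in K, (0 : ℝ) := by simp
  refine (tendsto_integral_filter_of_dominated_convergence
    (fun q : En n => (n.factorial : ℝ) / (2 * ‖q‖ ^ (2 * n))) ?_ ?_
    (integrableOn_const_div_norm_pow hn _ hK) ?_).trans (congrArg nhds hzero.symm).le
  · filter_upwards [self_mem_nhdsWithin] with ε hε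
    simp only [density_freg hn hε]
    exact Measurable.aestronglyMeasurable (by fun_prop)
  · filter_upwards [self_mem_nhdsWithin] with ε hε
    filter_upwards [hae] with q hq
    simpa using norm_density_freg_sub_le hn hε hq
  · filter_upwards [hae] with q hq
    exact tendsto_iff_norm_sub_tendsto_zero.mp (tendsto_density_freg hn hq)

end
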